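/- Let R, S, T be finite binary relations on the natural numbers and let Q = {(a,b,c) : (a,b) ∈ R ∧ (b,c) ∈ S ∧ (a,c) ∈ T}. If nonnegative real numbers λ_R, λ_S, λ_T satisfy the fractional edge cover constraints λ_R + λ_T ≥ 1, λ_R + λ_S ≥ 1, and λ_S + λ_T ≥ 1, then |Q| ≤ |R|^(λ_R) · |S|^(λ_S) · |T|^(λ_T). -/

import Mathlib

/-!
Write `N, r, s, t` for the cardinalities of `Q, R, S, T`. The polyhedron of fractional edge covers
of the triangle has the vertices `(1,1,0)`, `(1,0,1)`, `(0,1,1)`, `(1/2,1/2,1/2)`, and every cover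
dominates a convex combination of them. So it suffices to bound `N` at the vertices. Two relations
determine a triple of `Q`, which gives `N ≤ r * s`, `N ≤ r * t`, `N ≤ s * t`. The vertex
`(1/2,1/2,1/2)` is `N ^ 2 ≤ r * s * t` (`triangle_card_sq_le`), proved by Cauchy–Schwarz over `R`.
The combination is carried out on logarithms, in `cover_combination`.
-/

/-- Cauchy–Schwarz over the fibres of `Q → R` bounds `|Q| ^ 2` by `|R|` times the number of
`(a, b, c, c')` with `(a, b, c), (a, b, c') ∈ Q`, and such a quadruple is determined by
`(b, c) ∈ S` and `(a, c') ∈ T`. -/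
lemma triangle_card_sq_le (R S T : Finset (ℕ × ℕ)) (Q : Finset (ℕ × ℕ × ℕ))
    (hQ : ∀ a b c : ℕ, (a, b, c) ∈ Q → (a, b) ∈ R ∧ (b, c) ∈ S ∧ (a, c) ∈ T) :
    Q.card ^ 2 ≤ R.card * (S.card * T.card) := by
  let F : ℕ × ℕ → Finset (ℕ × ℕ × ℕ) := fun p => Q.filter fun q => (q.1, q.2.1) = p
  have hcard : Q.card = ∑ p ∈ R, (F p).card :=
    Finset.card_eq_sum_card_fiberwise fun q hq => (hQ q.1 q.2.1 q.2.2 hq).1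
  have hpairs : ∑ p ∈ R, (F p).card ^ 2 ≤ S.card * T.card := by
    have h : ∑ p ∈ R, (F p).card ^ 2 = (R.sigma fun p => F p ×ˢ F p).card := by
      simp [Finset.card_sigma, sq]
    rw [h, ← Finset.card_product]
    refine Finset.card_le_card_of_injOn
      (fun x => ((x.2.1.2.1, x.2.1.2.2), (x.2.2.1, x.2.2.2.2))) ?_ ?_
    · rintro ⟨p, ⟨a, b, c⟩, ⟨a', b', c'⟩⟩ hx
      simp only [Finset.coe_sigma, Set.mem_sigma_iff, Finset.mem_coe, Finset.mem_product,
        Finset.mem_filter, F] at hx ⊢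
      exact ⟨(hQ _ _ _ hx.2.1.1).2.1, (hQ _ _ _ hx.2.2.1).2.2⟩
    · rintro ⟨p, ⟨a, b, c⟩, ⟨a', b', c'⟩⟩ hx ⟨q, ⟨d, e, f⟩, ⟨d', e', f'⟩⟩ hy hxy
      simp only [Finset.coe_sigma, Set.mem_sigma_iff, Finset.mem_coe, Finset.mem_product,
        Finset.mem_filter, F] at hx hy hxy
      obtain ⟨-, ⟨-, rfl⟩, -, h1⟩ := hx
      obtain ⟨-, ⟨-, rfl⟩, -, h2⟩ := hy
      simp only [Prod.mk.injEq] at h1 h2 hxy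
      obtain ⟨rfl, rfl⟩ := h1
      obtain ⟨rfl, rfl⟩ := h2
      obtain ⟨⟨rfl, rfl⟩, rfl, rfl⟩ := hxy
      rfl
  calc Q.card ^ 2 = (∑ p ∈ R, (F p).card) ^ 2 := by rw [hcard]
    _ ≤ R.card * ∑ p ∈ R, (F p).card ^ 2 := sq_sum_le_card_mul_sum_sq
    _ ≤ R.card * (S.card * T.card) := Nat.mul_le_mul_left _ hpairs

/-- The linear programming step: a bound at each vertex of the cover polyhedron yields the bound
at every cover `(a, b, c)`. -/
lemma cover_combination {n x y z a b c : ℝ} (hx : 0 ≤ x) (hy : 0 ≤ y) (hz : 0 ≤ z)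
    (hxy : n ≤ x + y) (hxz : n ≤ x + z) (hyz : n ≤ y + z) (hxyz : 2 * n ≤ x + y + z)
    (ha : 0 ≤ a) (hb : 0 ≤ b) (hc : 0 ≤ c)
    (hac : 1 ≤ a + c) (hab : 1 ≤ a + b) (hbc : 1 ≤ b + c) :
    n ≤ a * x + b * y + c * z := by
  rcases le_total (a + b + c) 2 with hσ | hσ
  · -- Here `(a, b, c)` is itself the convex combination of the four vertices with weights
    -- `a + b - 1`, `a + c - 1`, `b + c - 1` and `4 - 2 * (a + b + c)`.
    linarith [mul_le_mul_of_nonneg_left hxy (sub_nonneg.2 hab),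
      mul_le_mul_of_nonneg_left hxz (sub_nonneg.2 hac),
      mul_le_mul_of_nonneg_left hyz (sub_nonneg.2 hbc),
      mul_le_mul_of_nonneg_left hxyz (sub_nonneg.2 hσ)]
  rcases le_total 1 b with hb1 | hb1
  · rcases le_total 1 c with hc1 | hc1
    · nlinarith [mul_nonneg ha hx, mul_nonneg (sub_nonneg.2 hb1) hy,
        mul_nonneg (sub_nonneg.2 hc1) hz]
    · -- `(a, b, c)` dominates `(1 - c, 1, c)`.
      linarith [mul_le_mul_of_nonneg_left hyz hc,
        mul_le_mul_of_nonneg_left hxy (sub_nonneg.2 hc1),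
        mul_nonneg (sub_nonneg.2 hb1) hy, mul_nonneg (sub_nonneg.2 hac) hx]
  · rcases le_total 1 c with hc1 | hc1
    · -- `(a, b, c)` dominates `(1 - b, b, 1)`.
      linarith [mul_le_mul_of_nonneg_left hyz hb,
        mul_le_mul_of_nonneg_left hxz (sub_nonneg.2 hb1),
        mul_nonneg (sub_nonneg.2 hc1) hz, mul_nonneg (sub_nonneg.2 hab) hx]
    · -- `(a, b, c)` dominates `(2 - b - c, b, c)`, a combination of the three integral vertices.
      linarith [mul_le_mul_of_nonneg_left hxy (sub_nonneg.2 hc1),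
        mul_le_mul_of_nonneg_left hxz (sub_nonneg.2 hb1),
        mul_le_mul_of_nonneg_left hyz (sub_nonneg.2 hbc),
        mul_nonneg (sub_nonneg.2 hσ) hx]

theorem triangle_query_fractional_cover_bound
    (R S T : Finset (ℕ × ℕ))
    (Q : Finset (ℕ × ℕ × ℕ))
    (hQ : ∀ a b c : ℕ, (a, b, c) ∈ Q ↔ (a, b) ∈ R ∧ (b, c) ∈ S ∧ (a, c) ∈ T)
    (lR lS lT : ℝ)
    (hlR : 0 ≤ lR) (hlS : 0 ≤ lS) (hlT : 0 ≤ lT)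
    (ha : 1 ≤ lR + lT) (hb : 1 ≤ lR + lS) (hc : 1 ≤ lS + lT) :
    (Q.card : ℝ) ≤ (R.card : ℝ) ^ lR * (S.card : ℝ) ^ lS * (T.card : ℝ) ^ lT := by
  rcases Q.eq_empty_or_nonempty with rfl | hne
  · simp only [Finset.card_empty, Nat.cast_zero]
    positivity
  have hRS : Q.card ≤ R.card * S.card := by
    rw [← Finset.card_product]
    refine Finset.card_le_card_of_injOn (fun q => ((q.1, q.2.1), (q.2.1, q.2.2))) ?_ ?_
    · rintro ⟨a, b, c⟩ hq
      have := (hQ a b c).1 hq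
      simp [this]
    · rintro ⟨a, b, c⟩ - ⟨a', b', c'⟩ - h
      simp_all
  have hRT : Q.card ≤ R.card * T.card := by
    rw [← Finset.card_product]
    refine Finset.card_le_card_of_injOn (fun q => ((q.1, q.2.1), (q.1, q.2.2))) ?_ ?_
    · rintro ⟨a, b, c⟩ hq
      have := (hQ a b c).1 hq
      simp [this]
    · rintro ⟨a, b, c⟩ - ⟨a', b', c'⟩ - h
      simp_all
  have hST : Q.card ≤ S.card * T.card := by
    rw [← Finset.card_product]
    refine Finset.card_le_card_of_injOn (fun q => ((q.2.1, q.2.2), (q.1, q.2.2))) ?_ ?_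
    · rintro ⟨a, b, c⟩ hq
      have := (hQ a b c).1 hq
      simp [this]
    · rintro ⟨a, b, c⟩ - ⟨a', b', c'⟩ - h
      simp_all
  have hRST := triangle_card_sq_le R S T Q fun a b c => (hQ a b c).1
  obtain ⟨⟨a, b, c⟩, hq⟩ := hne
  obtain ⟨h1, h2, h3⟩ := (hQ a b c).1 hq
  have hN : (0 : ℝ) < Q.card := by exact_mod_cast Finset.card_pos.2 ⟨_, hq⟩
  have hr : (0 : ℝ) < R.card := by exact_mod_cast Finset.card_pos.2 ⟨_, h1⟩
  have hs : (0 : ℝ) < S.card := by exact_mod_cast Finset.card_pos.2 ⟨_, h2⟩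
  have ht : (0 : ℝ) < T.card := by exact_mod_cast Finset.card_pos.2 ⟨_, h3⟩
  have lRS : Real.log Q.card ≤ Real.log R.card + Real.log S.card := by
    rw [← Real.log_mul hr.ne' hs.ne']
    exact Real.log_le_log hN (by exact_mod_cast hRS)
  have lRT : Real.log Q.card ≤ Real.log R.card + Real.log T.card := by
    rw [← Real.log_mul hr.ne' ht.ne']
    exact Real.log_le_log hN (by exact_mod_cast hRT)
  have lST : Real.log Q.card ≤ Real.log S.card + Real.log T.card := by
    rw [← Real.log_mul hs.ne' ht.ne']
    exact Real.log_le_log hN (by exact_mod_cast hST)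
  have lRST : 2 * Real.log Q.card ≤ Real.log R.card + Real.log S.card + Real.log T.card := by
    have h : Real.log ((Q.card : ℝ) ^ 2) ≤ Real.log (R.card * (S.card * T.card)) :=
      Real.log_le_log (by positivity) (by exact_mod_cast hRST)
    rw [Real.log_pow, Real.log_mul hr.ne' (by positivity), Real.log_mul hs.ne' ht.ne'] at h
    push_cast at h
    linarith
  rw [← Real.log_le_log_iff hN (by positivity), Real.log_mul (by positivity) (by positivity),
    Real.log_mul (by positivity) (by positivity), Real.log_rpow hr, Real.log_rpow hs,
    Real.log_rpow ht]
  exact cover_combination (Real.log_natCast_nonneg _) (Real.log_natCast_nonneg _)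
    (Real.log_natCast_nonneg _) lRS lRT lST lRST hlR hlS hlT ha hb hc
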